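/- The complete graph K₂₁ admits a decomposition of its edge set into 9 C₃-factors and 1 C₇-factor. -/

import Mathlib

open SimpleGraph

/-- `F` is an `H`-factor (of the complete graph on its vertex type, or of any graph
containing it): every connected component of `F`, viewed as an induced subgraph,
is isomorphic to `H`.  Since `F` is a graph on all of `V`, it is automatically spanning. -/
def IsHFactor {V W : Type*} (H : SimpleGraph W) (F : SimpleGraph V) : Prop :=
  ∀ c : F.ConnectedComponent, Nonempty (F.induce c.supp ≃g H)

/-- A `C_k`-factor: a spanning subgraph each of whose connected components is a
cycle of length `k` (in particular it is 2-regular). -/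
def IsCycleFactor {V : Type*} (k : ℕ) (F : SimpleGraph V) : Prop :=
  IsHFactor (SimpleGraph.cycleGraph k) F

/-- `(G; C_m^r, C_k^s)`: a partition of the edge set of `G` into `r` `C_m`-factors
and `s` `C_k`-factors. -/
def IsCycleDecomp {V : Type*} (G : SimpleGraph V) (m k r s : ℕ) : Prop :=
  ∃ F : Fin r ⊕ Fin s → SimpleGraph V,
    (∀ i, F i ≤ G) ∧
    (∀ e ∈ G.edgeSet, ∃! i, e ∈ (F i).edgeSet) ∧
    (∀ i : Fin r, IsCycleFactor m (F (Sum.inl i))) ∧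
    (∀ j : Fin s, IsCycleFactor k (F (Sum.inr j)))

/-!
Identify the vertices with `ℤ/7 × {0, 1, 2}`, the second coordinate being a colour, and let `ℤ/7`
act by translation of the first coordinate. Up to translation, a pair of distinct vertices is
determined by its two colours and the difference of its first coordinates, so it suffices that
every such difference occurs exactly once (Bose's method of differences). The `C₇`-factor joins
`(x, c)` to `(x ± 2 ^ c, c)`; two translation invariant `C₃`-factors consist of triangles with one
vertex of each colour; the differences that remain are those of a single `C₃`-factor, whose seven
translates complete the decomposition. All these pieces are chosen invariant under the multiplier
`(x, c) ↦ (2 x, c + 1)`, which leaves only ten classes of differences to arrange.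
-/

section Factors

variable {V W ι : Type*} {H : SimpleGraph W}

theorem IsHFactor.of_iso {X : Type*} {F : SimpleGraph V} {F' : SimpleGraph X}
    (hF : IsHFactor H F') (φ : F ≃g F') : IsHFactor H F := fun c => by
  obtain ⟨ψ⟩ := hF (φ.connectedComponentEquiv c)
  exact ⟨(RelIso.mk (c.isoEquivSupp φ) φ.map_adj_iff).trans ψ⟩

theorem supp_connectedComponentMk_bot_boxProd (hH : H.Preconnected) (v : ι × W) :
    ((⊥ □ H).connectedComponentMk v).supp = {u | u.1 = v.1} := by
  ext u
  simp [reachable_boxProd, hH u.2 v.2]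

theorem isHFactor_bot_boxProd (hH : H.Preconnected) :
    IsHFactor H ((⊥ : SimpleGraph ι) □ H) := by
  refine ConnectedComponent.ind fun v => ?_
  rw [supp_connectedComponentMk_bot_boxProd hH]
  exact ⟨{
    toFun := fun u => u.1.2
    invFun := fun w => ⟨(v.1, w), rfl⟩
    left_inv := fun ⟨u, hu⟩ => Subtype.ext (Prod.ext (Eq.symm hu) rfl)
    right_inv := fun w => rfl
    map_rel_iff' := fun {a b} => by simp [a.2.out, b.2.out] }⟩

/-- The graph on `V` made of vertex-disjoint copies of `H`, one for each `i : ι`, where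
`e v = (i, w)` says that `v` plays the role of `w` in copy `i`. The coordinates `e` are usually
bijective; being given as a function they keep adjacency decidable. -/
def copiesGraph (H : SimpleGraph W) (e : V → ι × W) : SimpleGraph V :=
  (⊥ □ H).comap e

theorem copiesGraph_adj {e : V → ι × W} {u v : V} :
    (copiesGraph H e).Adj u v ↔ H.Adj (e u).2 (e v).2 ∧ (e u).1 = (e v).1 := by
  simp [copiesGraph]

instance [DecidableEq ι] [DecidableRel H.Adj] (e : V → ι × W) :
    DecidableRel (copiesGraph H e).Adj :=
  fun _ _ => decidable_of_iff _ copiesGraph_adj.symm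

theorem isHFactor_copiesGraph (hH : H.Preconnected) {e : V → ι × W}
    (he : Function.Bijective e) : IsHFactor H (copiesGraph H e) :=
  (isHFactor_bot_boxProd hH).of_iso (Iso.comap (Equiv.ofBijective e he) _)

end Factors

section Decompositions

variable {V W ι κ : Type*} {m k r s : ℕ}

theorem isCycleDecomp_of_family {G : SimpleGraph V} (α : Fin r ≃ ι) (β : Fin s ≃ κ)
    (F : ι ⊕ κ → SimpleGraph V) (hle : ∀ i, F i ≤ G)
    (hF : ∀ u v, G.Adj u v → ∃! i, (F i).Adj u v)
    (hm : ∀ i, IsCycleFactor m (F (.inl i))) (hk : ∀ j, IsCycleFactor k (F (.inr j))) :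
    IsCycleDecomp G m k r s := by
  refine ⟨F ∘ Equiv.sumCongr α β, fun i => hle _, ?_, fun i => hm (α i), fun j => hk (β j)⟩
  refine Sym2.ind fun u v huv => ?_
  exact (Equiv.sumCongr α β).bijective.existsUnique_iff.mp (hF u v huv)

theorem IsCycleDecomp.of_iso {G : SimpleGraph V} {G' : SimpleGraph W}
    (h : IsCycleDecomp G' m k r s) (φ : G ≃g G') : IsCycleDecomp G m k r s := by
  obtain ⟨F, hle, hF, hm, hk⟩ := h
  have pull (i) : (F i).comap φ ≃g F i := Iso.comap φ.toEquiv (F i)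
  refine ⟨fun i => (F i).comap φ, fun i u v huv => φ.map_adj_iff.mp (hle i huv), ?_,
    fun i => (hm i).of_iso (pull _), fun j => (hk j).of_iso (pull _)⟩
  exact Sym2.ind fun u v huv => hF s(φ u, φ v) (φ.map_adj_iff.mpr huv)

end Decompositions

section Differences

variable {G C I : Type*} [AddGroup G]

/-- The image of a graph on `G × C` under the translation `(x, c) ↦ (g + x, c)`. -/
def translateGraph (g : G) (F : SimpleGraph (G × C)) : SimpleGraph (G × C) :=
  F.comap (Prod.map (-g + ·) id)

instance (g : G) (F : SimpleGraph (G × C)) [DecidableRel F.Adj] :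
    DecidableRel (translateGraph g F).Adj :=
  inferInstanceAs (DecidableRel (F.comap _).Adj)

/-- The translation by `-g`, as an isomorphism from the translate of a graph to the graph. -/
def translateGraphIso (g : G) (F : SimpleGraph (G × C)) : translateGraph g F ≃g F :=
  Iso.comap ((Equiv.addLeft (-g)).prodCongr (Equiv.refl C)) F

theorem translateGraph_translateGraph (g h : G) (F : SimpleGraph (G × C)) :
    translateGraph g (translateGraph h F) = translateGraph (g + h) F := by
  simp only [translateGraph, comap_comap, neg_add_rev]
  congr 1
  ext v <;> simp [add_assoc]

theorem translateGraph_adj_add (g x y : G) (c d : C) (F : SimpleGraph (G × C)) :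
    (translateGraph g F).Adj (g + x, c) (g + y, d) ↔ F.Adj (x, c) (y, d) := by
  simp [translateGraph]

theorem existsUnique_adj_of_differences {F : I → SimpleGraph (G × C)} (π : G → Equiv.Perm I)
    (hπ : ∀ g i, F (π g i) = translateGraph g (F i))
    (hF : ∀ c d x, (0, c) ≠ (x, d) → ∃! i, (F i).Adj (0, c) (x, d))
    (u v : G × C) (huv : u ≠ v) : ∃! i, (F i).Adj u v := by
  obtain ⟨⟨x, c⟩, y, d⟩ := u, v
  have hdiff : ((0 : G), c) ≠ (-x + y, d) := by
    simpa [Prod.ext_iff, eq_neg_add_iff_add_eq] using huv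
  have hadj (i) : (F (π x i)).Adj (x, c) (y, d) ↔ (F i).Adj (0, c) (-x + y, d) := by
    simpa [hπ] using translateGraph_adj_add x 0 (-x + y) c d (F i)
  rw [(π x).bijective.existsUnique_iff]
  simpa only [hadj] using hF c d (-x + y) hdiff

end Differences

section Construction

open scoped Fin.CommRing

/-- The `C₇`-factor that joins `(x, c)` to `(x ± 2 ^ c, c)`: dividing by `2 ^ c`, that is,
multiplying by `4 ^ c`, turns the cycle of colour `c` into the standard one. -/
def heptagons : SimpleGraph (Fin 7 × Fin 3) :=
  copiesGraph (cycleGraph 7) fun v => (v.2, 4 ^ v.2.val * v.1)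

instance : DecidableRel heptagons.Adj :=
  inferInstanceAs (DecidableRel (copiesGraph _ _).Adj)

/-- The `C₃`-factor of triangles `(x, 0)`, `(x + t, 1)`, `(x + 3 t, 2)`, whose successive
differences are `t`, `2 t`, `4 t`, so that it is invariant under the multiplier. -/
def transversals (t : Fin 7) : SimpleGraph (Fin 7 × Fin 3) :=
  copiesGraph (cycleGraph 3) fun v => (v.1 - (2 ^ v.2.val - 1) * t, v.2)

instance (t : Fin 7) : DecidableRel (transversals t).Adj :=
  inferInstanceAs (DecidableRel (copiesGraph _ _).Adj)

/-- The coordinates in the seven base triangles. These are the orbit of `(0, 0)` under the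
multiplier `(x, c) ↦ (2 x, c + 1)`, and the images under its powers of the triangles
`(1, 0)`, `(3, 0)`, `(5, 1)` and `(2, 0)`, `(5, 0)`, `(1, 1)`. A vertex is sent to its triangle,
`none` for the first and `some (j, c)` for the `c`-th image of the `j`-th of the other two, and its
position there. The table is indexed by `4 ^ c * x`, which the multiplier fixes. -/
def baseTriangleCoord : Fin 7 × Fin 3 → Option (Fin 2 × Fin 3) × Fin 3
  | (x, c) =>
    ![(none, c),
      (some (0, c), 0),
      (some (1, c), 0),
      (some (0, c), 1),
      (some (1, c - 1), 2),
      (some (1, c), 1),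
      (some (0, c - 1), 2)] (4 ^ c.val * x)

/-- The `C₃`-factor formed by the base triangles. -/
def baseTriangles : SimpleGraph (Fin 7 × Fin 3) :=
  copiesGraph (cycleGraph 3) baseTriangleCoord

instance : DecidableRel baseTriangles.Adj :=
  inferInstanceAs (DecidableRel (copiesGraph _ _).Adj)

/-- The ten factors: seven translates of the base triangles, the transversal triangles for the two
differences `t = 1, 5` that the base triangles leave uncovered, and the heptagons. -/
def factor : (Fin 7 ⊕ Fin 2) ⊕ Fin 1 → SimpleGraph (Fin 7 × Fin 3)
  | .inl (.inl g) => translateGraph g baseTriangles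
  | .inl (.inr j) => transversals (![1, 5] j)
  | .inr _ => heptagons

instance : ∀ i, DecidableRel (factor i).Adj
  | .inl (.inl g) => inferInstanceAs (DecidableRel (translateGraph g baseTriangles).Adj)
  | .inl (.inr j) => inferInstanceAs (DecidableRel (transversals (![1, 5] j)).Adj)
  | .inr _ => inferInstanceAs (DecidableRel heptagons.Adj)

theorem translateGraph_transversals (g t : Fin 7) :
    translateGraph g (transversals t) = transversals t := by
  ext u v
  simp [translateGraph, transversals, copiesGraph_adj, add_sub_assoc]

theorem translateGraph_heptagons (g : Fin 7) : translateGraph g heptagons = heptagons := by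
  ext u v
  simp only [translateGraph, heptagons, comap_adj, copiesGraph_adj, Prod.map_fst, Prod.map_snd,
    id_eq]
  refine and_congr_left fun hc => ?_
  simp [cycleGraph_adj, hc, mul_add]

theorem isCycleFactor_heptagons : IsCycleFactor 7 heptagons :=
  isHFactor_copiesGraph cycleGraph_preconnected (by decide +kernel)

theorem isCycleFactor_transversals (t : Fin 7) : IsCycleFactor 3 (transversals t) :=
  isHFactor_copiesGraph cycleGraph_preconnected (by decide +kernel +revert)

theorem baseTriangleCoord_bijective : Function.Bijective baseTriangleCoord := by
  decide +kernel

theorem isCycleFactor_baseTriangles : IsCycleFactor 3 baseTriangles :=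
  isHFactor_copiesGraph cycleGraph_preconnected baseTriangleCoord_bijective

/-- The permutation of the indices of the factors induced by the translation by `g`. -/
def shiftIndex (g : Fin 7) : Equiv.Perm ((Fin 7 ⊕ Fin 2) ⊕ Fin 1) :=
  ((Equiv.addLeft g).sumCongr (Equiv.refl _)).sumCongr (Equiv.refl _)

theorem factor_shiftIndex (g : Fin 7) : ∀ i, factor (shiftIndex g i) = translateGraph g (factor i)
  | .inl (.inl h) => (translateGraph_translateGraph g h _).symm
  | .inl (.inr _) => (translateGraph_transversals g _).symm
  | .inr _ => (translateGraph_heptagons g).symm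

theorem existsUnique_factor_adj_zero : ∀ (c d : Fin 3) (x : Fin 7), ((0 : Fin 7), c) ≠ (x, d) →
    ∃! i, (factor i).Adj (0, c) (x, d) := by
  unfold ExistsUnique
  decide +kernel

theorem existsUnique_factor_adj (u v : Fin 7 × Fin 3) (huv : u ≠ v) :
    ∃! i, (factor i).Adj u v :=
  existsUnique_adj_of_differences shiftIndex factor_shiftIndex existsUnique_factor_adj_zero u v huv

theorem isCycleFactor_factor_inl : ∀ i : Fin 7 ⊕ Fin 2, IsCycleFactor 3 (factor (.inl i))
  | .inl g => isCycleFactor_baseTriangles.of_iso (translateGraphIso g _)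
  | .inr _ => isCycleFactor_transversals _

end Construction

/-- Lemma 3.3: `(K₂₁; C₃^9, C₇^1)` exists. -/
theorem K21_cycle_decomp_9_1 :
    IsCycleDecomp (⊤ : SimpleGraph (Fin 21)) 3 7 9 1 := by
  have decomp : IsCycleDecomp (⊤ : SimpleGraph (Fin 7 × Fin 3)) 3 7 9 1 :=
    isCycleDecomp_of_family (finSumFinEquiv (m := 7) (n := 2)).symm (Equiv.refl _) factor
      (fun _ => le_top) existsUnique_factor_adj isCycleFactor_factor_inl
      fun _ => isCycleFactor_heptagons
  exact decomp.of_iso (Iso.completeGraph (finProdFinEquiv (m := 7) (n := 3)).symm)
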